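/- Let (F,G) : I → ℝ² be a C¹ solution of G' = F − 4FG, F' = −F² − G with G(t) < 1/4 on I, let t₀ ∈ I, set M(t) = √(1 − 4G(t)), M₀ = M(t₀), F₀ = F(t₀), and C₄ = (1 + M₀² + 4F₀²)/(4M₀). Then C₄ ≥ (1 + M₀²)/(4M₀) ≥ 1/2, and for all t ∈ I one has 4F(t)² = 4C₄·M(t) − 1 − M(t)², so that M₋ ≤ M(t) ≤ M₊ where M± = 2C₄ ± √(4C₄² − 1). -/

import Mathlib

/-- `M = √(1 − 4G)` solves `M' = −2FM`. -/
theorem hasDerivAt_sqrt_one_sub_four_mul {F G : ℝ → ℝ} {t : ℝ}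
    (hG : HasDerivAt G (F t - 4 * F t * G t) t) (hG4 : G t < 1 / 4) :
    HasDerivAt (fun s => √(1 - 4 * G s)) (-2 * F t * √(1 - 4 * G t)) t := by
  have hpos : 0 < 1 - 4 * G t := by linarith
  have hsq := Real.sq_sqrt hpos.le
  have hne := (Real.sqrt_pos.2 hpos).ne'
  convert ((hG.const_mul 4).const_sub 1).sqrt hpos.ne' using 1
  field_simp
  rw [hsq]
  ring

/-- The first integral `(1 + M² + 4F²) / (4M)`, with `M = √(1 − 4G)`, has zero derivative. -/
theorem hasDerivAt_firstIntegral {F G : ℝ → ℝ} {t : ℝ}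
    (hG : HasDerivAt G (F t - 4 * F t * G t) t)
    (hF : HasDerivAt F (-(F t) ^ 2 - G t) t) (hG4 : G t < 1 / 4) :
    HasDerivAt (fun s => (1 + √(1 - 4 * G s) ^ 2 + 4 * F s ^ 2) / (4 * √(1 - 4 * G s))) 0 t := by
  have hpos : 0 < 1 - 4 * G t := by linarith
  have hsq := Real.sq_sqrt hpos.le
  have hM := hasDerivAt_sqrt_one_sub_four_mul hG hG4
  have hne : 4 * √(1 - 4 * G t) ≠ 0 := by positivity
  refine ((((hM.pow 2).const_add 1).add ((hF.pow 2).const_mul 4)).div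
    (hM.const_mul 4) hne).congr_deriv ?_
  rw [div_eq_zero_iff]
  left
  simp only [Pi.add_apply, Pi.pow_apply]
  have hGt : G t = (1 - √(1 - 4 * G t) ^ 2) / 4 := by linarith
  generalize √(1 - 4 * G t) = m at hGt ⊢
  rw [hGt]
  push_cast
  ring

/-- For a C¹ solution of `G' = F − 4FG`, `F' = −F² − G` with `G < 1/4`, setting
`M = √(1 − 4G)`, `M₀ = M(t₀)`, `F₀ = F(t₀)` and `C₄ = (1 + M₀² + 4F₀²)/(4M₀)`, one has
`C₄ ≥ (1 + M₀²)/(4M₀) ≥ 1/2`, and along the solution `4F² = 4C₄M − 1 − M²`, hence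
`M₋ ≤ M ≤ M₊` where `M± = 2C₄ ± √(4C₄² − 1)`. -/
theorem bounds_on_M_d4
    (I : Set ℝ) (hI : I.OrdConnected)
    (F G : ℝ → ℝ)
    (hG : ∀ t ∈ I, HasDerivAt G (F t - 4 * F t * G t) t)
    (hF : ∀ t ∈ I, HasDerivAt F (-(F t) ^ 2 - G t) t)
    (hG4 : ∀ t ∈ I, G t < 1 / 4)
    (t₀ : ℝ) (ht₀ : t₀ ∈ I)
    (M : ℝ → ℝ) (hM : ∀ t, M t = Real.sqrt (1 - 4 * G t))
    (M₀ F₀ C₄ : ℝ)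
    (hM₀ : M₀ = M t₀) (hF₀ : F₀ = F t₀)
    (hC₄ : C₄ = (1 + M₀ ^ 2 + 4 * F₀ ^ 2) / (4 * M₀)) :
    C₄ ≥ (1 + M₀ ^ 2) / (4 * M₀) ∧ (1 + M₀ ^ 2) / (4 * M₀) ≥ 1 / 2 ∧
    ∀ t ∈ I, 4 * (F t) ^ 2 = 4 * C₄ * M t - 1 - (M t) ^ 2 ∧
      2 * C₄ - Real.sqrt (4 * C₄ ^ 2 - 1) ≤ M t ∧
      M t ≤ 2 * C₄ + Real.sqrt (4 * C₄ ^ 2 - 1) := by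
  have hpos : ∀ t ∈ I, 0 < M t := fun t ht => by
    rw [hM, Real.sqrt_pos]
    linarith [hG4 t ht]
  have hM₀pos : 0 < M₀ := hM₀ ▸ hpos t₀ ht₀
  refine ⟨?_, ?_, fun t ht => ?_⟩
  · rw [hC₄, ge_iff_le]
    gcongr ?_ / _
    nlinarith [sq_nonneg F₀]
  · rw [ge_iff_le, div_le_div_iff₀ two_pos (by positivity)]
    nlinarith [sq_nonneg (M₀ - 1)]
  · have hconst : C₄ = (1 + M t ^ 2 + 4 * F t ^ 2) / (4 * M t) := by
      have h := hI.convex.norm_image_sub_le_of_norm_hasDerivWithin_le (C := 0)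
        (fun s hs => (hasDerivAt_firstIntegral (hG s hs) (hF s hs) (hG4 s hs)).hasDerivWithinAt)
        (by simp) ht ht₀
      rw [zero_mul, norm_le_zero_iff, sub_eq_zero] at h
      simpa only [hC₄, hM₀, hF₀, hM] using h
    have hFt : 4 * F t ^ 2 = 4 * C₄ * M t - 1 - M t ^ 2 := by
      have := hpos t ht
      rw [hconst]
      field_simp
      ring
    have habs : |M t - 2 * C₄| ≤ √(4 * C₄ ^ 2 - 1) :=
      Real.abs_le_sqrt (by nlinarith [sq_nonneg (F t)])
    obtain ⟨hlower, hupper⟩ := abs_le.1 habs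
    exact ⟨hFt, by linarith, by linarith⟩
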